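/- arXiv:1803.07864 — 4 statements merged into one kernel-verified Lean document; each statement's English description precedes it below -/
import Mathlib

section
/- Fix V > 0, r > 0, γ ∈ [0,1), β > 0, δ > 0, Z_max > 0 and a state Z with 0 ≤ Z ≤ Z_max and (1−γ)·Z ≤ β·V²/(2r). Let D_low := (V²/(4rδ))·((1 − 2r(1−γ)Z/(βV²))² − 1) and D_high := (V²/(4rδ))·((2r(Z_max − (1−γ)Z)/(βV²) + 1)² − 1). Then for every D with D_low ≤ D ≤ D_high one has 0 ≤ g(Z, D) ≤ Z_max. -/
/-!
Both control bounds have the form `D_x = (V²/(4rδ))·(x² - 1)`, for which the radicand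
`V² + 4·r·D_x·δ` is the perfect square `(V·x)²`. The value `x = a` for `D_low` is nonnegative
because `(1-γ)·Z ≤ β·V²/(2r)`, and the value `x = b` for `D_high` because `(1-γ)·Z ≤ Z ≤ Z_max`.
Hence `V·a ≤ √(V² + 4·r·D·δ) ≤ V·b`. The next state is increasing in the root, and it equals `0`
and `Z_max` at the two endpoints.
-/

/-- Feasibility of the control bounds: for a battery state `0 ≤ Z ≤ Z_max`
with `(1-γ)·Z ≤ β·V²/(2r)`, every control `D` between
`D_low = (V²/(4rδ))·((1 - 2r(1-γ)Z/(βV²))² - 1)` and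
`D_high = (V²/(4rδ))·((2r(Z_max - (1-γ)Z)/(βV²) + 1)² - 1)` keeps the next
energy state `g(Z, D)` between `0` and `Z_max`. -/
theorem ess_control_bounds_keep_state (V r γ β δ Zmax Z D : ℝ)
    (hV : 0 < V) (hr : 0 < r) (hγ : γ ∈ Set.Ico (0 : ℝ) 1)
    (hβ : 0 < β) (hδ : 0 < δ) (hZmax : 0 < Zmax)
    (hZ0 : 0 ≤ Z) (hZ1 : Z ≤ Zmax)
    (hZ2 : (1 - γ) * Z ≤ β * V ^ 2 / (2 * r))
    (hDlow : (V ^ 2 / (4 * r * δ)) *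
        ((1 - 2 * r * (1 - γ) * Z / (β * V ^ 2)) ^ 2 - 1) ≤ D)
    (hDhigh : D ≤ (V ^ 2 / (4 * r * δ)) *
        ((2 * r * (Zmax - (1 - γ) * Z) / (β * V ^ 2) + 1) ^ 2 - 1)) :
    0 ≤ (1 - γ) * Z +
        (β * V / (2 * r)) * (Real.sqrt (V ^ 2 + 4 * r * D * δ) - V) ∧
    (1 - γ) * Z +
        (β * V / (2 * r)) * (Real.sqrt (V ^ 2 + 4 * r * D * δ) - V) ≤ Zmax := by
  set a := 1 - 2 * r * (1 - γ) * Z / (β * V ^ 2) with ha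
  set b := 2 * r * (Zmax - (1 - γ) * Z) / (β * V ^ 2) + 1 with hb
  have ha0 : 0 ≤ a := by
    rw [le_div_iff₀ (by positivity)] at hZ2
    rw [ha, sub_nonneg, div_le_one (by positivity)]
    linarith
  have hb0 : 0 ≤ b := by
    have h : 0 ≤ Zmax - (1 - γ) * Z := by nlinarith [mul_nonneg hγ.1 hZ0]
    positivity
  have hrad (x : ℝ) : V ^ 2 + 4 * r * ((V ^ 2 / (4 * r * δ)) * (x ^ 2 - 1)) * δ = (V * x) ^ 2 := by
    field_simp
    ring
  have hlow : V * a ≤ √(V ^ 2 + 4 * r * D * δ) := by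
    apply Real.le_sqrt_of_sq_le
    rw [← hrad]
    gcongr
  have hhigh : √(V ^ 2 + 4 * r * D * δ) ≤ V * b := by
    apply Real.sqrt_le_iff.mpr ⟨by positivity, ?_⟩
    rw [← hrad]
    gcongr
  have hstate_low : (1 - γ) * Z + (β * V / (2 * r)) * (V * a - V) = 0 := by
    rw [ha]
    field_simp
    ring
  have hstate_high : (1 - γ) * Z + (β * V / (2 * r)) * (V * b - V) = Zmax := by
    rw [hb]
    field_simp
    ring
  constructor
  · rw [← hstate_low]
    gcongr
  · rw [← hstate_high]
    gcongr
end

section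
/- Fix V > 0, r > 0, γ ∈ [0,1), Δt > 0, and suppose 0 < β ≤ Δt and δ ≥ Δt/β (discharging conversion factor δ = 1/η_d with efficiency η_d ≤ β/Δt). Then for every Z ≥ 0 and every D with −V²/(4rδ) ≤ D < 0, the energy loss satisfies E_loss(Z, D) > γ·Z ≥ 0. -/
/-- Discharging losses: with `0 < β ≤ Δt` and discharging conversion factor
`δ ≥ Δt/β`, for every state `Z ≥ 0` and every discharging action
`-V²/(4rδ) ≤ D < 0`, the energy loss
`E_loss(Z, D) = Z + D·Δt - g(Z, D)` satisfies `E_loss(Z, D) > γ·Z ≥ 0`. -/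
theorem ess_discharging_loss (V r γ Δt β δ Z D : ℝ)
    (hV : 0 < V) (hr : 0 < r) (hγ : γ ∈ Set.Ico (0 : ℝ) 1) (hΔt : 0 < Δt)
    (hβ0 : 0 < β) (hβ : β ≤ Δt) (hδ : δ ≥ Δt / β)
    (hZ : 0 ≤ Z) (hD0 : -V ^ 2 / (4 * r * δ) ≤ D) (hD : D < 0) :
    Z + D * Δt -
        ((1 - γ) * Z +
          (β * V / (2 * r)) * (Real.sqrt (V ^ 2 + 4 * r * D * δ) - V)) > γ * Z ∧
    γ * Z ≥ 0 := by
  refine ⟨?_, mul_nonneg hγ.1 hZ⟩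
  have hδ0 : 0 < δ := lt_of_lt_of_le (div_pos hΔt hβ0) hδ
  have hΔδ : Δt ≤ δ * β := (div_le_iff₀ hβ0).1 hδ
  have hrad : 0 ≤ V ^ 2 + 4 * r * D * δ := by
    have := (div_le_iff₀ (by positivity : 0 < 4 * r * δ)).1 hD0
    linarith
  have hlt : Real.sqrt (V ^ 2 + 4 * r * D * δ) < V := by
    rw [Real.sqrt_lt' hV]
    have := mul_neg_of_neg_of_pos hD (by positivity : 0 < 4 * r * δ)
    linarith
  have hsq := Real.sq_sqrt hrad
  set s := Real.sqrt (V ^ 2 + 4 * r * D * δ)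
  have hDΔ : D * (δ * β) ≤ D * Δt := mul_le_mul_of_nonpos_left hΔδ hD.le
  -- With `Δt` replaced by `δβ`, the loss beyond `γZ` is a perfect square, since
  -- `4rDδ = s² - V²`.
  have key : D * (δ * β) - β * V / (2 * r) * (s - V) = β * (V - s) ^ 2 / (4 * r) := by
    field_simp
    linear_combination (-2 : ℝ) * hsq
  have hpos : 0 < β * (V - s) ^ 2 / (4 * r) := by
    have := sub_pos.2 hlt
    positivity
  linarith
end

section
/- Fix V > 0, r > 0, γ ∈ [0,1), Δt > 0, β > 0, δ > 0 with β·δ ≤ Δt, and a real Z. Then the energy loss D ↦ E_loss(Z, D) is strictly increasing on the interval D ≥ 0: for all 0 ≤ D₁ < D₂ one has E_loss(Z, D₁) < E_loss(Z, D₂). -/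
/-!
Write `sᵢ = √(V² + 4 r Dᵢ δ)`. The loss is strictly increasing because the gain
`(β V / (2 r)) (s₂ - s₁)` in stored energy is beaten by `β δ (D₂ - D₁) ≤ Δt (D₂ - D₁)`:
the difference of squares `(s₂ - s₁) (s₂ + s₁) = 4 r δ (D₂ - D₁)`, together with
`s₁ ≥ V` and `s₂ > s₁`, gives `2 V (s₂ - s₁) < 4 r δ (D₂ - D₁)`.
-/

/-- With `β·δ ≤ Δt`, the energy loss
`E_loss(Z, D) = Z + D·Δt - g(Z, D)` is strictly increasing in the control
`D` on `D ≥ 0`. -/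
theorem ess_loss_strictMono (V r γ Δt β δ Z : ℝ)
    (hV : 0 < V) (hr : 0 < r) (hγ : γ ∈ Set.Ico (0 : ℝ) 1) (hΔt : 0 < Δt)
    (hβ : 0 < β) (hδ : 0 < δ) (hβδ : β * δ ≤ Δt) :
    ∀ D₁ D₂ : ℝ, 0 ≤ D₁ → D₁ < D₂ →
      Z + D₁ * Δt -
          ((1 - γ) * Z +
            (β * V / (2 * r)) * (Real.sqrt (V ^ 2 + 4 * r * D₁ * δ) - V)) <
        Z + D₂ * Δt -
          ((1 - γ) * Z +
            (β * V / (2 * r)) * (Real.sqrt (V ^ 2 + 4 * r * D₂ * δ) - V)) := by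
  intro D₁ D₂ h0 h12
  have hnn : 0 ≤ r * D₁ * δ := by positivity
  have hstep : r * D₁ * δ < r * D₂ * δ := by gcongr
  have hs₁V : V ≤ Real.sqrt (V ^ 2 + 4 * r * D₁ * δ) :=
    Real.le_sqrt_of_sq_le (by linarith)
  have hs₁₂ : Real.sqrt (V ^ 2 + 4 * r * D₁ * δ) < Real.sqrt (V ^ 2 + 4 * r * D₂ * δ) :=
    Real.sqrt_lt_sqrt (by nlinarith [sq_nonneg V]) (by linarith)
  have hsq₁ : Real.sqrt (V ^ 2 + 4 * r * D₁ * δ) ^ 2 = V ^ 2 + 4 * r * D₁ * δ :=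
    Real.sq_sqrt (by nlinarith [sq_nonneg V])
  have hsq₂ : Real.sqrt (V ^ 2 + 4 * r * D₂ * δ) ^ 2 = V ^ 2 + 4 * r * D₂ * δ :=
    Real.sq_sqrt (by nlinarith [sq_nonneg V])
  generalize Real.sqrt (V ^ 2 + 4 * r * D₁ * δ) = s₁ at *
  generalize Real.sqrt (V ^ 2 + 4 * r * D₂ * δ) = s₂ at *
  have hkey : V * (s₂ - s₁) < 2 * r * (δ * (D₂ - D₁)) := by
    nlinarith [mul_pos (sub_pos.2 hs₁₂) (show 0 < s₂ + s₁ - 2 * V by linarith)]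
  have hgain : β * V / (2 * r) * (s₂ - s₁) < β * δ * (D₂ - D₁) := by
    rw [div_mul_eq_mul_div, div_lt_iff₀ (by positivity)]
    nlinarith [mul_lt_mul_of_pos_left hkey hβ]
  have hloss : β * δ * (D₂ - D₁) ≤ Δt * (D₂ - D₁) :=
    mul_le_mul_of_nonneg_right hβδ (sub_nonneg.2 h12.le)
  linarith
end

section
/- (Proposition 1, parallel vs. series configuration.) Fix V > 0, r > 0, γ ∈ [0,1), Δt > 0, β > 0, δ > 0 with β·δ ≤ Δt, and Z ≥ 0. Let X and Y denote, respectively, the average energy demanded by the house and the average energy requested from the grid, with 0 < X ≤ Y. In the parallel configuration only the difference Y − X is processed by the energy storage system, while in the series configuration the full amount Y is processed. Then the energy loss in the parallel configuration is strictly smaller than in the series configuration: E_loss(Z, Y − X) < E_loss(Z, Y). -/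
/-!
With `a = √(V² + 4r(Y - X)δ)` and `b = √(V² + 4rYδ)` one has `V ≤ a < b` and
`b² - a² = 4rXδ`, so `2V(b - a) < (a + b)(b - a) = 4rXδ`. Multiplying by `β / (4r)`, the extra
energy stored in the series configuration is less than `βδX ≤ XΔt`, the extra energy supplied.
-/


/-- Proposition 1 (parallel vs. series configuration): if the house demands
average energy `X` with `0 < X ≤ Y`, where `Y` is the average energy requested
from the grid, then the parallel configuration (where only `Y - X` is
processed by the ESS) loses strictly less energy than the series configuration
(where the full `Y` is processed):
`E_loss(Z, Y - X) < E_loss(Z, Y)`. -/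
theorem parallel_loss_lt_series_loss (V r γ Δt β δ Z X Y : ℝ)
    (hV : 0 < V) (hr : 0 < r) (hγ : γ ∈ Set.Ico (0 : ℝ) 1) (hΔt : 0 < Δt)
    (hβ : 0 < β) (hδ : 0 < δ) (hβδ : β * δ ≤ Δt)
    (hZ : 0 ≤ Z) (hX : 0 < X) (hXY : X ≤ Y) :
    Z + (Y - X) * Δt -
        ((1 - γ) * Z +
          (β * V / (2 * r)) * (Real.sqrt (V ^ 2 + 4 * r * (Y - X) * δ) - V)) <
      Z + Y * Δt -
        ((1 - γ) * Z +
          (β * V / (2 * r)) * (Real.sqrt (V ^ 2 + 4 * r * Y * δ) - V)) := by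
  have hYX : 0 ≤ Y - X := sub_nonneg.mpr hXY
  have hY : 0 < Y := hX.trans_le hXY
  have hrXδ : 0 < r * X * δ := by positivity
  have ha2 := Real.sq_sqrt (show 0 ≤ V ^ 2 + 4 * r * (Y - X) * δ by positivity)
  have hb2 := Real.sq_sqrt (show 0 ≤ V ^ 2 + 4 * r * Y * δ by positivity)
  have hVa : V ≤ √(V ^ 2 + 4 * r * (Y - X) * δ) :=
    Real.le_sqrt_of_sq_le (le_add_of_nonneg_right (by positivity))
  have hab : √(V ^ 2 + 4 * r * (Y - X) * δ) < √(V ^ 2 + 4 * r * Y * δ) :=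
    Real.sqrt_lt_sqrt (by positivity) (by linarith)
  set a := √(V ^ 2 + 4 * r * (Y - X) * δ)
  set b := √(V ^ 2 + 4 * r * Y * δ)
  have hmul : V * (b - a) < 2 * r * X * δ := by
    have h : 0 < (b - a) * (a + b - 2 * V) := mul_pos (by linarith) (by linarith)
    linarith
  have hstored : β * V / (2 * r) * (b - a) < X * Δt :=
    calc β * V / (2 * r) * (b - a) = β / (2 * r) * (V * (b - a)) := by ring
      _ < β / (2 * r) * (2 * r * X * δ) := by gcongr
      _ = X * (β * δ) := by field_simp
      _ ≤ X * Δt := by gcongr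
  linarith
end
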